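/- Let p ≥ 2 be an integer and let k > 1 be an integer, k = 3m + r with r ∈ {0,1,2}. Then, modulo densities in Ω_k + Θ_k, one has: Ĩ*_{k,1}(u) ≡ 2 𝓘_{k,0}(u) − 2(p−1) 𝓘_{k,1}(u) and Ṽ*_{k,1}(u) ≡ 4p 𝓥_{k,0}(u). Moreover, for k > 2, W̃*_{k,1}(u) ≡ 2 𝓥_{k,0}(u) − 2 𝓦_{k,0}(u) − 2 𝓥_{k,1}(u). -/

import Mathlib

open MeasureTheory
open scoped Real BigOperators ENNReal

noncomputable section

/-- `n`-th spatial derivative. -/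
def pD (n : ℕ) (f : ℝ → ℂ) : ℝ → ℂ := iteratedDeriv n f

/-- Complex conjugate of the `n`-th spatial derivative. -/
def cD (n : ℕ) (f : ℝ → ℂ) (x : ℝ) : ℂ := (starRingEnd ℂ) (iteratedDeriv n f x)

/-- Integral over one period of the torus `𝕋 = ℝ/2πℤ`. -/
def tInt (f : ℝ → ℂ) : ℂ := ∫ x in (0:ℝ)..(2 * Real.pi), f x

/-- Squared `L²(𝕋)` norm. -/
def L2sq (f : ℝ → ℂ) : ℝ := ∫ x in (0:ℝ)..(2 * Real.pi), ‖f x‖ ^ 2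

/-- Squared `Hᵏ(𝕋)` norm: `‖u‖² = ‖u‖²_{L²} + ‖∂ₓᵏu‖²_{L²}`. -/
def HkSq (k : ℕ) (f : ℝ → ℂ) : ℝ := L2sq f + L2sq (pD k f)

/-- `Hᵏ(𝕋)` norm. -/
def HkNorm (k : ℕ) (f : ℝ → ℂ) : ℝ := Real.sqrt (HkSq k f)

/-- A classical (smooth and `2π`-periodic in space, differentiable in time) solution of the
defocusing NLS `i ∂ₜ u + ∂ₓ² u - u |u|^{2p} = 0` for times in the set `I`. -/
structure IsNLS (p : ℕ) (I : Set ℝ) (u : ℝ → ℝ → ℂ) : Prop where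
  smooth : ∀ t ∈ I, ContDiff ℝ (⊤ : ℕ∞) (u t)
  periodic : ∀ t ∈ I, Function.Periodic (u t) (2 * Real.pi)
  tdiff : ∀ (x : ℝ), ∀ t ∈ I, DifferentiableAt ℝ (fun s => u s x) t
  eqn : ∀ t ∈ I, ∀ x : ℝ,
    Complex.I * deriv (fun s => u s x) t + pD 2 (u t) x
      = u t x * ((‖u t x‖ : ℂ)) ^ (2 * p)

/-- `𝓘_{k,h}(u) = Im ∫ (∂ₓ^{k-h}u)² ∂ₓ^{2h}u · u^{p-2} ū^{p+1}`. -/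
def IdenR (p k h : ℕ) (f : ℝ → ℂ) : ℝ :=
  (tInt fun x => (pD (k - h) f x) ^ 2 * pD (2 * h) f x * f x ^ (p - 2) * (cD 0 f x) ^ (p + 1)).im

/-- `𝓚_{k,h}(u) = Im ∫ (∂ₓ^{k-h}u)² ∂ₓ^{2h}ū · u^{p-1} ū^{p}`. -/
def KdenR (p k h : ℕ) (f : ℝ → ℂ) : ℝ :=
  (tInt fun x => (pD (k - h) f x) ^ 2 * cD (2 * h) f x * f x ^ (p - 1) * (cD 0 f x) ^ p).im

/-- `𝓥_{k,h}(u) = Im ∫ ∂ₓ^{k-h}u ∂ₓ^{k-h-1}ū ∂ₓ^{2h+1}u · u^{p-1} ū^{p}`. -/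
def VdenR (p k h : ℕ) (f : ℝ → ℂ) : ℝ :=
  (tInt fun x => pD (k - h) f x * cD (k - h - 1) f x * pD (2 * h + 1) f x
      * f x ^ (p - 1) * (cD 0 f x) ^ p).im

/-- `𝓦_{k,h}(u) = Im ∫ ∂ₓ^{k-h}u ∂ₓ^{k-h-1}ū ∂ₓ^{2h+1}ū · u^{p} ū^{p-1}`. -/
def WdenR (p k h : ℕ) (f : ℝ → ℂ) : ℝ :=
  (tInt fun x => pD (k - h) f x * cD (k - h - 1) f x * cD (2 * h + 1) f x
      * f x ^ p * (cD 0 f x) ^ (p - 1)).im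

/-- `Ĩ_{k,h}(u) = Re ∫ (∂ₓ^{k-h}u)² ∂ₓ^{2h-2}u · ū^{p+1} u^{p-2}`. -/
def ItildeR (p k h : ℕ) (f : ℝ → ℂ) : ℝ :=
  (tInt fun x => (pD (k - h) f x) ^ 2 * pD (2 * h - 2) f x * (cD 0 f x) ^ (p + 1)
      * f x ^ (p - 2)).re

/-- `K̃_{k,h}(u) = Re ∫ (∂ₓ^{k-h}u)² ∂ₓ^{2h-2}ū · ū^{p} u^{p-1}`. -/
def KtildeR (p k h : ℕ) (f : ℝ → ℂ) : ℝ :=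
  (tInt fun x => (pD (k - h) f x) ^ 2 * cD (2 * h - 2) f x * (cD 0 f x) ^ p
      * f x ^ (p - 1)).re

/-- `Ṽ_{k,h}(u) = Re ∫ |∂ₓ^{k-h}u|² ∂ₓ^{2h-2}u · ū |u|^{2(p-1)}`. -/
def VtildeR (p k h : ℕ) (f : ℝ → ℂ) : ℝ :=
  (tInt fun x => pD (k - h) f x * cD (k - h) f x * pD (2 * h - 2) f x * cD 0 f x
      * (f x * cD 0 f x) ^ (p - 1)).re

/-- `W̃_{k,h}(u) = Re ∫ ∂ₓ^{k-h}u ∂ₓ^{k-h-1}ū ∂ₓ^{2h-1}u · ū^{p} u^{p-1}`. -/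
def WtildeR (p k h : ℕ) (f : ℝ → ℂ) : ℝ :=
  (tInt fun x => pD (k - h) f x * cD (k - h - 1) f x * pD (2 * h - 1) f x
      * (cD 0 f x) ^ p * f x ^ (p - 1)).re

/-- `Ĩ*_{k,h}`: the time derivative of `Ĩ_{k,h}` with `∂ₜu` replaced by `i∂ₓ²u`
and `∂ₜū` replaced by `-i∂ₓ²ū`. -/
def ItildeStar (p k h : ℕ) (f : ℝ → ℂ) : ℝ :=
  (tInt fun x =>
      2 * (Complex.I * pD (k - h + 2) f x) * pD (k - h) f x * pD (2 * h - 2) f x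
          * (cD 0 f x) ^ (p + 1) * f x ^ (p - 2)
    + (pD (k - h) f x) ^ 2 * (Complex.I * pD (2 * h) f x) * (cD 0 f x) ^ (p + 1)
          * f x ^ (p - 2)
    + (pD (k - h) f x) ^ 2 * pD (2 * h - 2) f x
          * (((p : ℂ) + 1) * (cD 0 f x) ^ p * (-Complex.I * cD 2 f x)) * f x ^ (p - 2)
    + (pD (k - h) f x) ^ 2 * pD (2 * h - 2) f x * (cD 0 f x) ^ (p + 1)
          * (((p : ℂ) - 2) * f x ^ (p - 3) * (Complex.I * pD 2 f x))).re

/-- `K̃*_{k,h}`. -/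
def KtildeStar (p k h : ℕ) (f : ℝ → ℂ) : ℝ :=
  (tInt fun x =>
      2 * (Complex.I * pD (k - h + 2) f x) * pD (k - h) f x * cD (2 * h - 2) f x
          * (cD 0 f x) ^ p * f x ^ (p - 1)
    + (pD (k - h) f x) ^ 2 * (-Complex.I * cD (2 * h) f x) * (cD 0 f x) ^ p * f x ^ (p - 1)
    + (pD (k - h) f x) ^ 2 * cD (2 * h - 2) f x
          * ((p : ℂ) * (cD 0 f x) ^ (p - 1) * (-Complex.I * cD 2 f x)) * f x ^ (p - 1)
    + (pD (k - h) f x) ^ 2 * cD (2 * h - 2) f x * (cD 0 f x) ^ p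
          * (((p : ℂ) - 1) * f x ^ (p - 2) * (Complex.I * pD 2 f x))).re

/-- `Ṽ*_{k,h}`. -/
def VtildeStar (p k h : ℕ) (f : ℝ → ℂ) : ℝ :=
  (tInt fun x =>
      (Complex.I * pD (k - h + 2) f x) * cD (k - h) f x * pD (2 * h - 2) f x * cD 0 f x
          * (f x * cD 0 f x) ^ (p - 1)
    + pD (k - h) f x * (-Complex.I * cD (k - h + 2) f x) * pD (2 * h - 2) f x * cD 0 f x
          * (f x * cD 0 f x) ^ (p - 1)
    + pD (k - h) f x * cD (k - h) f x * (Complex.I * pD (2 * h) f x) * cD 0 f x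
          * (f x * cD 0 f x) ^ (p - 1)
    + pD (k - h) f x * cD (k - h) f x * pD (2 * h - 2) f x * (-Complex.I * cD 2 f x)
          * (f x * cD 0 f x) ^ (p - 1)
    + pD (k - h) f x * cD (k - h) f x * pD (2 * h - 2) f x * cD 0 f x
          * (((p : ℂ) - 1) * (f x * cD 0 f x) ^ (p - 2)
              * ((Complex.I * pD 2 f x) * cD 0 f x + f x * (-Complex.I * cD 2 f x)))).re

/-- `W̃*_{k,h}`. -/
def WtildeStar (p k h : ℕ) (f : ℝ → ℂ) : ℝ :=
  (tInt fun x =>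
      (Complex.I * pD (k - h + 2) f x) * cD (k - h - 1) f x * pD (2 * h - 1) f x
          * (cD 0 f x) ^ p * f x ^ (p - 1)
    + pD (k - h) f x * (-Complex.I * cD (k - h + 1) f x) * pD (2 * h - 1) f x
          * (cD 0 f x) ^ p * f x ^ (p - 1)
    + pD (k - h) f x * cD (k - h - 1) f x * (Complex.I * pD (2 * h + 1) f x)
          * (cD 0 f x) ^ p * f x ^ (p - 1)
    + pD (k - h) f x * cD (k - h - 1) f x * pD (2 * h - 1) f x
          * ((p : ℂ) * (cD 0 f x) ^ (p - 1) * (-Complex.I * cD 2 f x)) * f x ^ (p - 1)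
    + pD (k - h) f x * cD (k - h - 1) f x * pD (2 * h - 1) f x * (cD 0 f x) ^ p
          * (((p : ℂ) - 1) * f x ^ (p - 2) * (Complex.I * pD 2 f x))).re

/-- The entries of the multi-index are nonincreasing. -/
def antitoneIdx {n : ℕ} (i : Fin n → ℕ) : Prop := ∀ l l' : Fin n, l ≤ l' → i l' ≤ i l

/-- The functional `𝓙_{(i,j)}(u) = ∫ ∂ₓ^{i₁}u ⋯ ∂ₓ^{iₙ}u ∂ₓ^{j₁}ū ⋯ ∂ₓ^{jₙ}ū`. -/
def Jfun {n : ℕ} (ij : (Fin n → ℕ) × (Fin n → ℕ)) (f : ℝ → ℂ) : ℂ :=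
  tInt fun x => (∏ l, pD (ij.1 l) f x) * ∏ l, cD (ij.2 l) f x

/-- The index set `𝓒ᵏ`. -/
def Cset (p k : ℕ) : Set ((Fin (2 * p + 1) → ℕ) × (Fin (2 * p + 1) → ℕ)) :=
  {ij | antitoneIdx ij.1 ∧ antitoneIdx ij.2 ∧ (∑ l, (ij.1 l + ij.2 l)) = 2 * k - 2 ∧
    ij.1 0 ≤ k - 1 ∧ ij.2 0 ≤ k - 1}

/-- The index set `𝓓ᵏ`. -/
def Dset (p k : ℕ) : Set ((Fin (p + 1) → ℕ) × (Fin (p + 1) → ℕ)) :=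
  {ij | antitoneIdx ij.1 ∧ antitoneIdx ij.2 ∧ (∑ l, (ij.1 l + ij.2 l)) = 2 * k ∧
    4 ≤ (∑ l, min (ij.1 l) 1) + ∑ l, min (ij.2 l) 1}

/-- The index set `𝓖ᵏ`. -/
def Gset (p k : ℕ) : Set ((Fin (p + 1) → ℕ) × (Fin (p + 1) → ℕ)) :=
  {ij | antitoneIdx ij.1 ∧ antitoneIdx ij.2 ∧ (∑ l, (ij.1 l + ij.2 l)) = 2 * k - 2 ∧
    ij.1 0 ≤ k - 1 ∧ ij.2 0 ≤ k - 1}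

/-- Smooth `2π`-periodic functions on the line (i.e. smooth functions on the torus). -/
abbrev SPfun := {f : ℝ → ℂ // ContDiff ℝ (⊤ : ℕ∞) f ∧ Function.Periodic f (2 * Real.pi)}

/-- The span `Ω_k + Θ_k` of the functionals `𝓙_{(i,j)}` for `(i,j) ∈ 𝓓ᵏ ∪ 𝓒ᵏ`. -/
def spanJ (p k : ℕ) : Submodule ℂ (SPfun → ℂ) :=
  Submodule.span ℂ
    (({F | ∃ ij ∈ Dset p k, F = fun f => Jfun ij f.1} ∪
      {F | ∃ ij ∈ Cset p k, F = fun f => Jfun ij f.1} : Set (SPfun → ℂ)))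

/-- Equivalence of densities modulo `Ω_k + Θ_k`. -/
def EquivMod (p k : ℕ) (F G : SPfun → ℂ) : Prop := F - G ∈ spanJ p k


/-! ### Helper lemmas -/

lemma pD_zero_apply (f : ℝ → ℂ) (x : ℝ) : pD 0 f x = f x := by simp [pD]

lemma conj_pD (n : ℕ) (f : ℝ → ℂ) (x : ℝ) : (starRingEnd ℂ) (pD n f x) = cD n f x := rfl

lemma conj_cD (n : ℕ) (f : ℝ → ℂ) (x : ℝ) : (starRingEnd ℂ) (cD n f x) = pD n f x := by
  simp [cD, pD]

lemma SP_hasDeriv_pD (f : SPfun) (n : ℕ) (x : ℝ) :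
    HasDerivAt (pD n f.1) (pD (n + 1) f.1 x) x := by
  have h : Differentiable ℝ (iteratedDeriv n f.1) :=
    f.2.1.differentiable_iteratedDeriv n (by exact_mod_cast WithTop.coe_lt_top n)
  have h2 := (h x).hasDerivAt
  rw [← iteratedDeriv_succ] at h2
  exact h2

lemma SP_hasDeriv_cD (f : SPfun) (n : ℕ) (x : ℝ) :
    HasDerivAt (cD n f.1) (cD (n + 1) f.1 x) x := by
  exact (Complex.conjCLE.toContinuousLinearMap.hasFDerivAt.comp_hasDerivAt x
    (SP_hasDeriv_pD f n x))

lemma SP_cont_pD (f : SPfun) (n : ℕ) : Continuous (pD n f.1) :=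
  continuous_iff_continuousAt.2 fun x => (SP_hasDeriv_pD f n x).continuousAt

lemma SP_cont_cD (f : SPfun) (n : ℕ) : Continuous (cD n f.1) :=
  continuous_iff_continuousAt.2 fun x => (SP_hasDeriv_cD f n x).continuousAt

lemma SP_per_pD (f : SPfun) (n : ℕ) : pD n f.1 (2 * Real.pi) = pD n f.1 0 := by
  have h : (fun x => f.1 (x + 2 * Real.pi)) = f.1 := funext fun x => f.2.2 x
  have h2 := congrFun (iteratedDeriv_comp_add_const n f.1 (2 * Real.pi)) 0
  rw [h] at h2
  simpa [pD] using h2.symm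

lemma SP_per_cD (f : SPfun) (n : ℕ) : cD n f.1 (2 * Real.pi) = cD n f.1 0 := by
  rw [← conj_pD, ← conj_pD, SP_per_pD]

lemma tInt_add' {a b : ℝ → ℂ} (ha : Continuous a) (hb : Continuous b) :
    tInt (fun x => a x + b x) = tInt a + tInt b :=
  intervalIntegral.integral_add (ha.intervalIntegrable _ _) (hb.intervalIntegrable _ _)

lemma tInt_cmul (c : ℂ) (a : ℝ → ℂ) : tInt (fun x => c * a x) = c * tInt a :=
  intervalIntegral.integral_const_mul _ _

lemma tInt_conj (a : ℝ → ℂ) :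
    tInt (fun x => (starRingEnd ℂ) (a x)) = (starRingEnd ℂ) (tInt a) := by
  unfold tInt
  rw [intervalIntegral.integral_of_le (by positivity), intervalIntegral.integral_of_le (by positivity)]
  exact integral_conj

/-- Densities whose integral lies in the span. -/
def GoodD (p k : ℕ) (r : SPfun → ℝ → ℂ) : Prop :=
  (∀ f, Continuous (r f)) ∧ (fun f => tInt (r f)) ∈ spanJ p k

lemma GoodD.plus {p k : ℕ} {r s : SPfun → ℝ → ℂ} (hr : GoodD p k r) (hs : GoodD p k s) :
    GoodD p k (fun f x => r f x + s f x) := by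
  refine ⟨fun f => (hr.1 f).add (hs.1 f), ?_⟩
  have := (spanJ p k).add_mem hr.2 hs.2
  convert this using 1
  funext f
  exact tInt_add' (hr.1 f) (hs.1 f)

lemma GoodD.cmul {p k : ℕ} {r : SPfun → ℝ → ℂ} (c : ℂ) (hr : GoodD p k r) :
    GoodD p k (fun f x => c * r f x) := by
  refine ⟨fun f => continuous_const.mul (hr.1 f), ?_⟩
  have := (spanJ p k).smul_mem c hr.2
  convert this using 1
  funext f
  exact tInt_cmul c _

lemma GoodD.zero (p k : ℕ) : GoodD p k (fun _ _ => 0) := by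
  refine ⟨fun f => continuous_const, ?_⟩
  convert (spanJ p k).zero_mem using 1
  funext f
  simp [tInt]

lemma Jfun_conj {n : ℕ} (ij : (Fin n → ℕ) × (Fin n → ℕ)) (f : ℝ → ℂ) :
    (starRingEnd ℂ) (Jfun ij f) = Jfun (ij.2, ij.1) f := by
  unfold Jfun
  rw [← tInt_conj]
  congr 1
  funext x
  simp only [map_mul, map_prod, conj_pD, conj_cD]
  ring

lemma spanJ_conj {p k : ℕ} {F : SPfun → ℂ} (hF : F ∈ spanJ p k) :
    (fun f => (starRingEnd ℂ) (F f)) ∈ spanJ p k := by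
  unfold spanJ at hF
  induction hF using Submodule.span_induction with
  | mem F h =>
    apply Submodule.subset_span
    rcases h with ⟨ij, ⟨h1, h2, h3, h4⟩, rfl⟩ | ⟨ij, ⟨h1, h2, h3, h4, h5⟩, rfl⟩
    · refine Or.inl ⟨(ij.2, ij.1), ⟨h2, h1, ?_, ?_⟩, funext fun f => Jfun_conj ij f.1⟩
      · rw [← h3]; exact Finset.sum_congr rfl fun _ _ => add_comm _ _
      · rw [add_comm]; exact h4
    · refine Or.inr ⟨(ij.2, ij.1), ⟨h2, h1, ?_, h5, h4⟩, funext fun f => Jfun_conj ij f.1⟩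
      rw [← h3]; exact Finset.sum_congr rfl fun _ _ => add_comm _ _
  | zero => convert (spanJ p k).zero_mem using 1; funext f; simp
  | add F G _ _ hF hG => 
    convert (spanJ p k).add_mem hF hG using 1; funext f; simp
  | smul c F _ hF => 
    convert (spanJ p k).smul_mem ((starRingEnd ℂ) c) hF using 1; funext f; simp

lemma spanJ_re {p k : ℕ} {F : SPfun → ℂ} (hF : F ∈ spanJ p k) :
    (fun f => (((F f).re : ℝ) : ℂ)) ∈ spanJ p k := by
  have := (spanJ p k).smul_mem (1 / 2 : ℂ) ((spanJ p k).add_mem hF (spanJ_conj hF))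
  convert this using 1
  funext f
  simp only [Pi.smul_apply, Pi.add_apply, smul_eq_mul]
  rw [Complex.add_conj]
  push_cast; ring

/-- The monomial with the given lists of derivative orders. -/
def monL (L M : List ℕ) (f : ℝ → ℂ) (x : ℝ) : ℂ :=
  (L.map fun n => pD n f x).prod * (M.map fun n => cD n f x).prod

/-- Number of nonzero entries. -/
def nzL (L : List ℕ) : ℕ := (L.map fun n => min n 1).sum

lemma list_sorted_fn (n : ℕ) (L : List ℕ) (hL : L.length = n) :
    ∃ i : Fin n → ℕ, antitoneIdx i ∧ (List.ofFn i).Perm L := by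
  subst hL
  have hp := List.perm_insertionSort (fun a b : ℕ => b ≤ a) L
  have hs := List.pairwise_insertionSort (fun a b : ℕ => b ≤ a) L
  set S := L.insertionSort (fun a b : ℕ => b ≤ a) with hS
  have hlen : S.length = L.length := hp.length_eq
  refine ⟨fun l => S.get (l.cast hlen.symm), ?_, ?_⟩
  · intro l l' hll
    rcases hll.eq_or_lt with h | h
    · subst h; exact le_rfl
    · exact List.pairwise_iff_get.1 hs _ _ (by simpa using h)
  · have : List.ofFn (fun l : Fin L.length => S.get (l.cast hlen.symm)) = S := by
      apply List.ext_get
      · simp [hlen]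
      · intro n h1 h2; simp
    rw [this]; exact hp

lemma GoodD.mono {p k : ℕ} (L M : List ℕ) (hL : L.length = p + 1) (hM : M.length = p + 1)
    (hs : L.sum + M.sum = 2 * k) (h4 : 4 ≤ nzL L + nzL M) :
    GoodD p k (fun f x => monL L M f.1 x) := by
  obtain ⟨i, hi, hiL⟩ := list_sorted_fn _ L hL
  obtain ⟨j, hj, hjM⟩ := list_sorted_fn _ M hM
  have e : ∀ f : SPfun, (fun x => monL L M f.1 x)
      = fun x => (∏ l, pD (i l) f.1 x) * ∏ l, cD (j l) f.1 x := by
    intro f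
    funext x
    unfold monL
    rw [← (hiL.map fun n => pD n f.1 x).prod_eq, ← (hjM.map fun n => cD n f.1 x).prod_eq]
    simp only [List.map_ofFn, List.prod_ofFn, Function.comp_apply]
  constructor
  · intro f
    show Continuous (fun x => monL L M f.1 x)
    rw [e]
    exact (continuous_finsetProd _ fun l _ => SP_cont_pD f _).mul
      (continuous_finsetProd _ fun l _ => SP_cont_cD f _)
  · apply Submodule.subset_span
    refine Or.inl ⟨(i, j), ⟨hi, hj, ?_, ?_⟩, ?_⟩
    · rw [Finset.sum_add_distrib, ← hs, ← hiL.sum_eq, ← hjM.sum_eq]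
      simp only [List.sum_ofFn]
    · refine h4.trans (le_of_eq ?_)
      unfold nzL
      rw [← (hiL.map fun n => min n 1).sum_eq, ← (hjM.map fun n => min n 1).sum_eq]
      simp only [List.map_ofFn, List.sum_ofFn, Function.comp_apply]
    · funext f
      show tInt (fun x => monL L M f.1 x) = _
      unfold Jfun
      rw [e]

lemma re_mem_of_deriv {p k : ℕ} (t G w E : SPfun → ℝ → ℂ) (ht : ∀ f, Continuous (t f))
    (hw : ∀ f, Continuous (w f)) (hE : GoodD p k E)
    (hG : ∀ f x, HasDerivAt (G f) (t f x - E f x - (w f x - (starRingEnd ℂ) (w f x))) x)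
    (hper : ∀ f, G f (2 * Real.pi) = G f 0) :
    (fun f => (((tInt (t f)).re : ℝ) : ℂ)) ∈ spanJ p k := by
  have := spanJ_re hE.2
  convert this using 1
  funext f
  congr 1
  have hcw : Continuous (fun x => (starRingEnd ℂ) (w f x)) := Complex.continuous_conj.comp (hw f)
  have hEc := hE.1 f
  have htc := ht f
  have hwc := hw f
  have h0 : tInt (fun x => t f x - E f x - (w f x - (starRingEnd ℂ) (w f x))) = 0 := by
    unfold tInt
    rw [intervalIntegral.integral_eq_sub_of_hasDerivAt (fun x _ => hG f x)
      (Continuous.intervalIntegrable (by fun_prop) _ _), hper, sub_self]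
  have h1 : tInt (fun x => t f x - E f x - (w f x - (starRingEnd ℂ) (w f x)))
      = tInt (t f) - tInt (E f) - (tInt (w f) - (starRingEnd ℂ) (tInt (w f))) := by
    rw [← tInt_conj]
    unfold tInt
    have i1 := htc.intervalIntegrable (μ := volume) 0 (2 * Real.pi)
    have i2 := hEc.intervalIntegrable (μ := volume) 0 (2 * Real.pi)
    have i3 := hwc.intervalIntegrable (μ := volume) 0 (2 * Real.pi)
    have i4 := hcw.intervalIntegrable (μ := volume) 0 (2 * Real.pi)
    rw [intervalIntegral.integral_sub (i1.sub i2) (i3.sub i4), intervalIntegral.integral_sub i1 i2,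
      intervalIntegral.integral_sub i3 i4]
  rw [h0] at h1
  have h2 := congrArg Complex.re h1
  simp at h2
  linarith

lemma good_mono {p k : ℕ} (L M : List ℕ) (a b : ℕ) (hL : L.length + a = p + 1)
    (hM : M.length + b = p + 1) (hs : L.sum + M.sum = 2 * k) (h4 : 4 ≤ nzL L + nzL M) :
    GoodD p k (fun f x => (L.map fun n => pD n f.1 x).prod * f.1 x ^ a
      * ((M.map fun n => cD n f.1 x).prod * cD 0 f.1 x ^ b)) := by
  have := GoodD.mono (p := p) (k := k) (L ++ List.replicate a 0) (M ++ List.replicate b 0)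
    (by simpa using hL) (by simpa using hM) (by simpa using hs)
    (by simpa [nzL] using h4)
  simpa [monL, pD_zero_apply] using this

lemma good_cases {k q m : ℕ} (hk : k = m + 2) :
    GoodD (q + 2) k (fun f x => ((q : ℂ) * f.1 x ^ (q - 1)) *
      (pD (m + 1) f.1 x ^ 2 * pD 1 f.1 x ^ 2 * cD 0 f.1 x ^ (q + 3))) := by
  subst hk
  rcases q with _ | q
  · simpa using GoodD.zero 2 (m + 2)
  · have := (good_mono (p := q + 1 + 2) (k := m + 2) [m + 1, m + 1, 1, 1] [] q (q + 1 + 3)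
      (by simp; ring) (by simp) (by simp; ring) (by simp [nzL])).cmul ((q + 1 : ℕ) : ℂ)
    convert this using 3
    simp
    ring

lemma q_pow (q : ℕ) (z : ℂ) : (q : ℂ) * z ^ q = (q : ℂ) * z ^ (q - 1) * z := by
  rcases q with _ | q
  · simp
  · simp [pow_succ]; ring

lemma SP_hasDeriv (f : SPfun) (x : ℝ) : HasDerivAt f.1 (pD 1 f.1 x) x := by
  have := SP_hasDeriv_pD f 0 x
  simpa [pD] using this

lemma tInt_re_comb1 (c : ℝ) {s a : ℝ → ℂ} (hs : Continuous s) (ha : Continuous a) :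
    (tInt (fun x => s x + (c * Complex.I) * a x)).re = (tInt s).re - c * (tInt a).im := by
  rw [tInt_add' hs (by fun_prop), tInt_cmul]
  simp; ring

lemma conj_f (f : ℝ → ℂ) (x : ℝ) : (starRingEnd ℂ) (f x) = cD 0 f x := by simp [cD]

lemma star_I (q m : ℕ) : EquivMod (q + 2) (m + 2)
      (fun f => Complex.ofReal (ItildeStar (q + 2) (m + 2) 1 f.1))
      (fun f => Complex.ofReal
        (2 * IdenR (q + 2) (m + 2) 0 f.1
          - 2 * (((q + 2 : ℕ) : ℝ) - 1) * IdenR (q + 2) (m + 2) 1 f.1)) := by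
  unfold EquivMod
  have hE := ((((good_cases (q := q) (m := m) rfl).cmul ((q : ℂ) + 1)).plus
    ((good_mono (p := q + 2) (k := m + 2) [m + 1, m + 1, 1] [1] q (q + 2)
      (by simp; ring) (by simp; ring) (by simp; ring) (by simp [nzL])).cmul
        (2 * ((q : ℂ) + 1) * (q + 3)))).plus
    ((good_mono (p := q + 2) (k := m + 2) [m + 1, m + 1] [1, 1] (q + 1) (q + 1)
      (by simp; ring) (by simp; ring) (by simp; ring) (by simp [nzL])).cmul
        (((q : ℂ) + 3) * (q + 2)))).cmul Complex.I
  have key := re_mem_of_deriv (p := q + 2) (k := m + 2)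
    (fun f x => ((
      2 * (Complex.I * pD (m + 3) f.1 x) * pD (m + 1) f.1 x * f.1 x
          * (cD 0 f.1 x) ^ (q + 3) * f.1 x ^ q
    + (pD (m + 1) f.1 x) ^ 2 * (Complex.I * pD 2 f.1 x) * (cD 0 f.1 x) ^ (q + 3)
          * f.1 x ^ q
    + (pD (m + 1) f.1 x) ^ 2 * f.1 x
          * (((q : ℂ) + 3) * (cD 0 f.1 x) ^ (q + 2) * (-Complex.I * cD 2 f.1 x)) * f.1 x ^ q
    + (pD (m + 1) f.1 x) ^ 2 * f.1 x * (cD 0 f.1 x) ^ (q + 3)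
          * ((q : ℂ) * f.1 x ^ (q - 1) * (Complex.I * pD 2 f.1 x)))
    + ((2 : ℝ) * Complex.I) *
        ((pD (m + 2) f.1 x) ^ 2 * f.1 x * f.1 x ^ q * (cD 0 f.1 x) ^ (q + 3)))
    + ((-2 * ((q : ℝ) + 1) : ℝ) * Complex.I) *
        ((pD (m + 1) f.1 x) ^ 2 * pD 2 f.1 x * f.1 x ^ q * (cD 0 f.1 x) ^ (q + 3)))
    (fun f x => 2 * Complex.I * pD (m + 2) f.1 x * pD (m + 1) f.1 x
          * (f.1 x ^ (q + 1) * cD 0 f.1 x ^ (q + 3))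
        - Complex.I * pD (m + 1) f.1 x ^ 2 * (((q : ℂ) + 1) * f.1 x ^ q * pD 1 f.1 x
            * cD 0 f.1 x ^ (q + 3)
            + ((q : ℂ) + 3) * f.1 x ^ (q + 1) * cD 0 f.1 x ^ (q + 2) * cD 1 f.1 x))
    (fun _ _ => 0) _ ?_ ?_ hE ?_ ?_
  · convert key using 1
    funext f
    have c0 := f.2.1.continuous
    have cp := SP_cont_pD f
    have cc := SP_cont_cD f
    rw [tInt_re_comb1 _ (by fun_prop) (by fun_prop), tInt_re_comb1 _ (by fun_prop) (by fun_prop)]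
    simp only [Pi.sub_apply, ItildeStar, IdenR]
    rw [← Complex.ofReal_sub]
    congr 1
    simp [pD_zero_apply]
    simp only [show (q : ℂ) + 2 + 1 = q + 3 by ring, show q + 2 + 1 = q + 3 from rfl,
      show m + 1 + 2 = m + 3 from rfl]
    ring
  · intro f
    have c0 := f.2.1.continuous
    have cp := SP_cont_pD f
    have cc := SP_cont_cD f
    fun_prop
  · intro f; exact continuous_const
  · intro f x
    have hf := SP_hasDeriv f x
    have hu := fun n => SP_hasDeriv_pD f n x
    have hv := fun n => SP_hasDeriv_cD f n x
    refine HasDerivAt.congr_deriv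
      (((((hu (m + 2)).const_mul (2 * Complex.I)).fun_mul (hu (m + 1))).fun_mul
          ((hf.fun_pow (q + 1)).fun_mul ((hv 0).fun_pow (q + 3)))).fun_sub
       ((((hu (m + 1)).fun_pow 2).const_mul Complex.I).fun_mul
         (((((hf.fun_pow q).const_mul ((q : ℂ) + 1)).fun_mul (hu 1)).fun_mul
             ((hv 0).fun_pow (q + 3))).fun_add
          ((((hf.fun_pow (q + 1)).const_mul ((q : ℂ) + 3)).fun_mul
             ((hv 0).fun_pow (q + 2))).fun_mul (hv 1))))) ?_
    simp
    linear_combination (Complex.I * pD (m + 1) f.1 x ^ 2 * cD 0 f.1 x ^ (q + 3) * pD 2 f.1 x) * q_pow q (f.1 x)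
  · intro f
    have h0 : f.1 (2 * Real.pi) = f.1 0 := by simpa using f.2.2 0
    simp only [SP_per_pD, SP_per_cD, h0]

lemma star_V (q m : ℕ) : EquivMod (q + 2) (m + 2)
      (fun f => Complex.ofReal (VtildeStar (q + 2) (m + 2) 1 f.1))
      (fun f => Complex.ofReal (4 * ((q + 2 : ℕ) : ℝ) * VdenR (q + 2) (m + 2) 0 f.1)) := by
  unfold EquivMod
  have hE := ((good_mono (p := q + 2) (k := m + 2) [m + 1, 1, 1] [m + 1] q (q + 2)
      (by simp; ring) (by simp; ring) (by simp; ring) (by simp [nzL])).cmul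
        (-Complex.I * (q + 2) * (q + 1))).plus
    ((good_mono (p := q + 2) (k := m + 2) [m + 1] [m + 1, 1, 1] (q + 2) q
      (by simp; ring) (by simp; ring) (by simp; ring) (by simp [nzL])).cmul
        (Complex.I * (q + 2) * (q + 1)))
  have key := re_mem_of_deriv (p := q + 2) (k := m + 2)
    (fun f x => ((Complex.I * pD (m + 3) f.1 x) * cD (m + 1) f.1 x * f.1 x * cD 0 f.1 x
          * (f.1 x * cD 0 f.1 x) ^ (q + 1)
    + pD (m + 1) f.1 x * (-Complex.I * cD (m + 3) f.1 x) * f.1 x * cD 0 f.1 x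
          * (f.1 x * cD 0 f.1 x) ^ (q + 1)
    + pD (m + 1) f.1 x * cD (m + 1) f.1 x * (Complex.I * pD 2 f.1 x) * cD 0 f.1 x
          * (f.1 x * cD 0 f.1 x) ^ (q + 1)
    + pD (m + 1) f.1 x * cD (m + 1) f.1 x * f.1 x * (-Complex.I * cD 2 f.1 x)
          * (f.1 x * cD 0 f.1 x) ^ (q + 1)
    + pD (m + 1) f.1 x * cD (m + 1) f.1 x * f.1 x * cD 0 f.1 x
          * (((q : ℂ) + 1) * (f.1 x * cD 0 f.1 x) ^ q
              * ((Complex.I * pD 2 f.1 x) * cD 0 f.1 x + f.1 x * (-Complex.I * cD 2 f.1 x))))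
    + ((4 * ((q : ℝ) + 2) : ℝ) * Complex.I) *
        (pD (m + 2) f.1 x * cD (m + 1) f.1 x * pD 1 f.1 x
      * f.1 x ^ (q + 1) * (cD 0 f.1 x) ^ (q + 2)))
    (fun f x => Complex.I * (pD (m + 2) f.1 x * cD (m + 1) f.1 x
            - pD (m + 1) f.1 x * cD (m + 2) f.1 x)
          * (f.1 x ^ (q + 2) * cD 0 f.1 x ^ (q + 2))
        + Complex.I * ((q : ℂ) + 2) * (f.1 x ^ (q + 1) * cD 0 f.1 x ^ (q + 1))
          * (pD (m + 1) f.1 x * cD (m + 1) f.1 x)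
          * (pD 1 f.1 x * cD 0 f.1 x - f.1 x * cD 1 f.1 x))
    (fun f x => 2 * ((q : ℂ) + 2) * Complex.I * (pD (m + 2) f.1 x * cD (m + 1) f.1 x
      * pD 1 f.1 x * f.1 x ^ (q + 1) * (cD 0 f.1 x) ^ (q + 2))) _ ?_ ?_ hE ?_ ?_
  · convert key using 1
    funext f
    have c0 := f.2.1.continuous
    have cp := SP_cont_pD f
    have cc := SP_cont_cD f
    rw [tInt_re_comb1 _ (by fun_prop) (by fun_prop)]
    simp only [Pi.sub_apply, VtildeStar, VdenR]
    rw [← Complex.ofReal_sub]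
    congr 1
    simp [pD_zero_apply]
    simp only [show (q : ℂ) + 2 - 1 = q + 1 by ring, show m + 1 + 2 = m + 3 from rfl]
  · intro f
    have c0 := f.2.1.continuous
    have cp := SP_cont_pD f
    have cc := SP_cont_cD f
    fun_prop
  · intro f
    have c0 := f.2.1.continuous
    have cp := SP_cont_pD f
    have cc := SP_cont_cD f
    fun_prop
  · intro f x
    have hf := SP_hasDeriv f x
    have hu := fun n => SP_hasDeriv_pD f n x
    have hv := fun n => SP_hasDeriv_cD f n x
    refine HasDerivAt.congr_deriv
      ((((((hu (m + 2)).fun_mul (hv (m + 1))).fun_sub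
          ((hu (m + 1)).fun_mul (hv (m + 2)))).const_mul Complex.I).fun_mul
          ((hf.fun_pow (q + 2)).fun_mul ((hv 0).fun_pow (q + 2)))).fun_add
       ((((((hf.fun_pow (q + 1)).fun_mul ((hv 0).fun_pow (q + 1))).const_mul
          (Complex.I * ((q : ℂ) + 2))).fun_mul ((hu (m + 1)).fun_mul (hv (m + 1))))).fun_mul
         (((hu 1).fun_mul (hv 0)).fun_sub (hf.fun_mul (hv 1))))) ?_
    simp [conj_pD, conj_cD, conj_f f.1, pD_zero_apply f.1, Complex.conj_ofNat]
    ring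
  · intro f
    have h0 : f.1 (2 * Real.pi) = f.1 0 := by simpa using f.2.2 0
    simp only [SP_per_pD, SP_per_cD, h0]

lemma star_W (q m : ℕ) : EquivMod (q + 2) (m + 3)
      (fun f => Complex.ofReal (WtildeStar (q + 2) (m + 3) 1 f.1))
      (fun f => Complex.ofReal (2 * VdenR (q + 2) (m + 3) 0 f.1
        - 2 * WdenR (q + 2) (m + 3) 0 f.1 - 2 * VdenR (q + 2) (m + 3) 1 f.1)) := by
  unfold EquivMod
  have hE := ((((((((good_mono (p := q + 2) (k := m + 3) [m + 2, 1, 1] [m + 2] q (q + 2)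
      (by simp; ring) (by simp; ring) (by simp; ring) (by simp [nzL])).cmul
        (-(Complex.I / 2) * (q + 1))).plus
    ((good_mono (p := q + 2) (k := m + 3) [m + 2] [m + 2, 1, 1] (q + 2) q
      (by simp; ring) (by simp; ring) (by simp; ring) (by simp [nzL])).cmul
        ((Complex.I / 2) * (q + 1)))).plus
    ((good_mono (p := q + 2) (k := m + 3) [m + 2, 1] [m + 1, 2] (q + 1) (q + 1)
      (by simp; ring) (by simp; ring) (by simp; ring) (by simp [nzL])).cmul
        (-Complex.I * (q + 2)))).plus
    ((good_mono (p := q + 2) (k := m + 3) [m + 2, 1, 2] [m + 1] q (q + 2)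
      (by simp; ring) (by simp; ring) (by simp; ring) (by simp [nzL])).cmul
        (Complex.I * (q + 1)))).plus
    ((good_mono (p := q + 2) (k := m + 3) [m + 3, 1] [m + 1, 1] (q + 1) (q + 1)
      (by simp; ring) (by simp; ring) (by simp; ring) (by simp [nzL])).cmul
        (-Complex.I * (q + 2)))).plus
    ((good_mono (p := q + 2) (k := m + 3) [m + 3, 1, 1] [m + 1] q (q + 2)
      (by simp; ring) (by simp; ring) (by simp; ring) (by simp [nzL])).cmul
        (-Complex.I * (q + 1)))).plus
    ((good_mono (p := q + 2) (k := m + 3) [m + 2, 2] [m + 1, 1] (q + 1) (q + 1)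
      (by simp; ring) (by simp; ring) (by simp; ring) (by simp [nzL])).cmul
        (Complex.I * (q + 2)))).plus
    ((good_mono (p := q + 2) (k := m + 3) [m + 2, 2, 1] [m + 1] q (q + 2)
      (by simp; ring) (by simp; ring) (by simp; ring) (by simp [nzL])).cmul
        (Complex.I * (q + 1)))
  have key := re_mem_of_deriv (p := q + 2) (k := m + 3)
    (fun f x => (((
      (Complex.I * pD (m + 4) f.1 x) * cD (m + 1) f.1 x * pD 1 f.1 x
          * (cD 0 f.1 x) ^ (q + 2) * f.1 x ^ (q + 1)
    + pD (m + 2) f.1 x * (-Complex.I * cD (m + 3) f.1 x) * pD 1 f.1 x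
          * (cD 0 f.1 x) ^ (q + 2) * f.1 x ^ (q + 1)
    + pD (m + 2) f.1 x * cD (m + 1) f.1 x * (Complex.I * pD 3 f.1 x)
          * (cD 0 f.1 x) ^ (q + 2) * f.1 x ^ (q + 1)
    + pD (m + 2) f.1 x * cD (m + 1) f.1 x * pD 1 f.1 x
          * (((q : ℂ) + 2) * (cD 0 f.1 x) ^ (q + 1) * (-Complex.I * cD 2 f.1 x)) * f.1 x ^ (q + 1)
    + pD (m + 2) f.1 x * cD (m + 1) f.1 x * pD 1 f.1 x * (cD 0 f.1 x) ^ (q + 2)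
          * (((q : ℂ) + 1) * f.1 x ^ q * (Complex.I * pD 2 f.1 x)))
    + ((2 : ℝ) * Complex.I) * (pD (m + 3) f.1 x * cD (m + 2) f.1 x * pD 1 f.1 x
      * f.1 x ^ (q + 1) * (cD 0 f.1 x) ^ (q + 2)))
    + ((-2 : ℝ) * Complex.I) * (pD (m + 3) f.1 x * cD (m + 2) f.1 x * cD 1 f.1 x
      * f.1 x ^ (q + 2) * (cD 0 f.1 x) ^ (q + 1)))
    + ((-2 : ℝ) * Complex.I) * (pD (m + 2) f.1 x * cD (m + 1) f.1 x * pD 3 f.1 x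
      * f.1 x ^ (q + 1) * (cD 0 f.1 x) ^ (q + 2)))
    (fun f x => Complex.I * (pD (m + 3) f.1 x * pD 1 f.1 x - pD (m + 2) f.1 x * pD 2 f.1 x)
          * cD (m + 1) f.1 x * (f.1 x ^ (q + 1) * cD 0 f.1 x ^ (q + 2))
        + (Complex.I / 2) * (f.1 x ^ (q + 1) * cD 0 f.1 x ^ (q + 1))
          * (pD (m + 2) f.1 x * cD (m + 2) f.1 x)
          * (pD 1 f.1 x * cD 0 f.1 x - f.1 x * cD 1 f.1 x))
    (fun f x => (Complex.I / 2) * (pD (m + 3) f.1 x * cD (m + 2) f.1 x * pD 1 f.1 x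
          * f.1 x ^ (q + 1) * (cD 0 f.1 x) ^ (q + 2)
        - pD (m + 3) f.1 x * cD (m + 2) f.1 x * cD 1 f.1 x
          * f.1 x ^ (q + 2) * (cD 0 f.1 x) ^ (q + 1)
        + pD (m + 2) f.1 x * cD (m + 2) f.1 x * pD 2 f.1 x
          * f.1 x ^ (q + 1) * (cD 0 f.1 x) ^ (q + 2))
        - Complex.I * (pD (m + 2) f.1 x * cD (m + 3) f.1 x * pD 1 f.1 x
          * f.1 x ^ (q + 1) * (cD 0 f.1 x) ^ (q + 2))) _ ?_ ?_ hE ?_ ?_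
  · convert key using 1
    funext f
    have c0 := f.2.1.continuous
    have cp := SP_cont_pD f
    have cc := SP_cont_cD f
    rw [tInt_re_comb1 _ (by fun_prop) (by fun_prop), tInt_re_comb1 _ (by fun_prop) (by fun_prop),
      tInt_re_comb1 _ (by fun_prop) (by fun_prop)]
    simp only [Pi.sub_apply, WtildeStar, VdenR, WdenR]
    rw [← Complex.ofReal_sub]
    congr 1
    simp [pD_zero_apply]
    simp only [show (q : ℂ) + 2 - 1 = q + 1 by ring, show m + 2 + 2 = m + 4 from rfl,
      show m + 2 + 1 = m + 3 from rfl]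
    ring
  · intro f
    have c0 := f.2.1.continuous
    have cp := SP_cont_pD f
    have cc := SP_cont_cD f
    fun_prop
  · intro f
    have c0 := f.2.1.continuous
    have cp := SP_cont_pD f
    have cc := SP_cont_cD f
    fun_prop
  · intro f x
    have hf := SP_hasDeriv f x
    have hu := fun n => SP_hasDeriv_pD f n x
    have hv := fun n => SP_hasDeriv_cD f n x
    refine HasDerivAt.congr_deriv
      (((((((hu (m + 3)).fun_mul (hu 1)).fun_sub
          ((hu (m + 2)).fun_mul (hu 2))).const_mul Complex.I).fun_mul (hv (m + 1))).fun_mul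
          ((hf.fun_pow (q + 1)).fun_mul ((hv 0).fun_pow (q + 2)))).fun_add
       ((((((hf.fun_pow (q + 1)).fun_mul ((hv 0).fun_pow (q + 1))).const_mul
          (Complex.I / 2)).fun_mul ((hu (m + 2)).fun_mul (hv (m + 2))))).fun_mul
         (((hu 1).fun_mul (hv 0)).fun_sub (hf.fun_mul (hv 1))))) ?_
    simp [conj_pD, conj_cD, conj_f f.1, pD_zero_apply f.1, Complex.conj_ofNat]
    ring
  · intro f
    have h0 : f.1 (2 * Real.pi) = f.1 0 := by simpa using f.2.2 0
    simp only [SP_per_pD, SP_per_cD, h0]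

/-- Lemma 3.2: the identities for `Ĩ*_{k,1}`, `Ṽ*_{k,1}` and (for `k > 2`) `W̃*_{k,1}`
modulo `Ω_k + Θ_k`. -/
theorem star_identities_h_one (p k : ℕ) (hp : 2 ≤ p) (hk : 1 < k) :
    EquivMod p k (fun f => Complex.ofReal (ItildeStar p k 1 f.1))
      (fun f => Complex.ofReal
        (2 * IdenR p k 0 f.1 - 2 * ((p : ℝ) - 1) * IdenR p k 1 f.1)) ∧
    EquivMod p k (fun f => Complex.ofReal (VtildeStar p k 1 f.1))
      (fun f => Complex.ofReal (4 * (p : ℝ) * VdenR p k 0 f.1)) ∧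
    (2 < k →
      EquivMod p k (fun f => Complex.ofReal (WtildeStar p k 1 f.1))
        (fun f => Complex.ofReal
          (2 * VdenR p k 0 f.1 - 2 * WdenR p k 0 f.1 - 2 * VdenR p k 1 f.1))) := by
  obtain ⟨q, rfl⟩ := Nat.exists_eq_add_of_le' hp
  refine ⟨?_, ?_, fun hk' => ?_⟩
  · obtain ⟨m, rfl⟩ := Nat.exists_eq_add_of_le' hk
    exact star_I q m
  · obtain ⟨m, rfl⟩ := Nat.exists_eq_add_of_le' hk
    exact star_V q m
  · obtain ⟨m, rfl⟩ := Nat.exists_eq_add_of_le' hk'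
    exact star_W q m
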